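/- Let f(x) = a·x² + b·x + c with a ≥ 1 and b, c ≥ 0. For every i with 1 ≤ i ≤ f(1) + 1, the maximum degree of the underlying graph of the q-Jaco graph J_i(f) equals i − 1, and the Jaconian set of J_i(f) is the whole vertex set {v_1, …, v_i}. -/

import Mathlib

/-- In-degree of vertex `v_j` in the (root) Jaco graph with incidence function `f`:
`d⁻(v_j) = |{ i : 1 ≤ i < j, i + f i − d⁻(v_i) ≥ j }|`. -/
noncomputable def jacoIn (f : ℕ → ℕ) (j : ℕ) : ℕ :=
  Nat.strongRecOn j (fun j ih =>
    (((Finset.Ico 1 j).attach).filter (fun i : {x // x ∈ Finset.Ico 1 j} =>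
      j ≤ i.1 + f i.1 - ih i.1 (Finset.mem_Ico.mp i.2).2)).card)

/-- The arc `(v_i, v_j)` is present in the Jaco graph iff `1 ≤ i < j` and
`i + f i − d⁻(v_i) ≥ j`. -/
def jacoArc (f : ℕ → ℕ) (i j : ℕ) : Prop :=
  1 ≤ i ∧ i < j ∧ j ≤ i + f i - jacoIn f i

noncomputable instance (f : ℕ → ℕ) (i j : ℕ) : Decidable (jacoArc f i j) := by
  unfold jacoArc; infer_instance

/-- The underlying undirected simple graph `J*_n(f)` of the finite Jaco graph `J_n(f)`,
on vertex set `{v_1, …, v_n}` (vertex `x : Fin n` represents `v_{x+1}`). -/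
def jacoGraph (f : ℕ → ℕ) (n : ℕ) : SimpleGraph (Fin n) :=
  SimpleGraph.fromRel (fun x y => jacoArc f (x.1 + 1) (y.1 + 1))

noncomputable instance (f : ℕ → ℕ) (n : ℕ) : DecidableRel (jacoGraph f n).Adj := fun x y =>
  decidable_of_iff
    (x ≠ y ∧ (jacoArc f (x.1 + 1) (y.1 + 1) ∨ jacoArc f (y.1 + 1) (x.1 + 1)))
    (by unfold jacoGraph; exact (SimpleGraph.fromRel_adj (fun a b : Fin n => jacoArc f (a.1 + 1) (b.1 + 1)) x y).symm)

/-!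
The lower neighbours of `v_i` number at most `i - 1`, so `i + f i - d⁻(v_i) ≥ f i + 1`: the arc
`(v_i, v_j)` is present whenever `i < j ≤ f i + 1`. If `n ≤ f i + 1` for all `i < n`, then `J*_n(f)`
is therefore complete. A quadratic `f` with coefficients in `ℕ` satisfies `f 1 ≤ f i`, so this
applies for `n ≤ f 1 + 1`.
-/

theorem jacoIn_eq_card (f : ℕ → ℕ) (j : ℕ) :
    jacoIn f j = ((Finset.Ico 1 j).filter fun i => j ≤ i + f i - jacoIn f i).card := by
  have hrec : jacoIn f j =
      ((Finset.Ico 1 j).attach.filter fun i => j ≤ i.1 + f i.1 - jacoIn f i.1).card := by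
    rw [jacoIn, Nat.strongRecOn_eq]
    rfl
  rw [hrec, Finset.filter_attach fun i => j ≤ i + f i - jacoIn f i]
  simp

theorem jacoIn_le_sub_one (f : ℕ → ℕ) (j : ℕ) : jacoIn f j ≤ j - 1 :=
  calc
    jacoIn f j = ((Finset.Ico 1 j).filter fun i => j ≤ i + f i - jacoIn f i).card :=
      jacoIn_eq_card f j
    _ ≤ (Finset.Ico 1 j).card := Finset.card_filter_le _ _
    _ = j - 1 := Nat.card_Ico 1 j

theorem jacoArc_of_le_add_one {f : ℕ → ℕ} {i j : ℕ} (hi : 1 ≤ i) (hij : i < j)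
    (hj : j ≤ f i + 1) : jacoArc f i j := by
  have hin : jacoIn f i ≤ i - 1 := jacoIn_le_sub_one f i
  exact ⟨hi, hij, by omega⟩

theorem jacoGraph_adj {f : ℕ → ℕ} {n : ℕ} {v w : Fin n} :
    (jacoGraph f n).Adj v w ↔
      v ≠ w ∧ (jacoArc f (v + 1) (w + 1) ∨ jacoArc f (w + 1) (v + 1)) :=
  SimpleGraph.fromRel_adj _ v w

theorem jacoGraph_eq_top {f : ℕ → ℕ} {n : ℕ} (hf : ∀ x ∈ Finset.Ico 1 n, n ≤ f x + 1) :
    jacoGraph f n = ⊤ := by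
  have arc_of_lt {v w : Fin n} (hvw : v < w) : jacoArc f (v + 1) (w + 1) :=
    jacoArc_of_le_add_one (by omega) (by omega)
      (w.isLt.trans_le (hf _ (Finset.mem_Ico.mpr (by omega))))
  rw [SimpleGraph.eq_top_iff_forall_ne_adj]
  exact fun v w hne => jacoGraph_adj.mpr ⟨hne, hne.lt_or_gt.imp arc_of_lt arc_of_lt⟩

theorem jacoGraph_isRegularOfDegree {f : ℕ → ℕ} {n : ℕ}
    (hf : ∀ x ∈ Finset.Ico 1 n, n ≤ f x + 1) : (jacoGraph f n).IsRegularOfDegree (n - 1) := by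
  intro v
  have huniv : (jacoGraph f n).IsUniversal v :=
    SimpleGraph.eq_top_iff_forall_isUniversal.mp (jacoGraph_eq_top hf) v
  rw [((jacoGraph f n).degree_eq_card_sub_one v).mpr huniv, Fintype.card_fin]

theorem qJaco_small_maxDegree_and_jaconian_set_general (f : ℕ → ℕ) (i : ℕ) (h1 : 1 ≤ i)
    (hf : ∀ x ∈ Finset.Ico 1 i, i ≤ f x + 1) :
    (jacoGraph f i).maxDegree = i - 1 ∧
    {v : Fin i | (jacoGraph f i).degree v = (jacoGraph f i).maxDegree} = Set.univ := by
  have : Nonempty (Fin i) := ⟨⟨0, h1⟩⟩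
  have hreg : (jacoGraph f i).IsRegularOfDegree (i - 1) := jacoGraph_isRegularOfDegree hf
  exact ⟨hreg.maxDegree_eq, Set.eq_univ_of_forall fun v =>
    (hreg.degree_eq v).trans hreg.maxDegree_eq.symm⟩

/-- For `f(x) = a·x² + b·x + c` (`a ≥ 1`, `b, c ≥ 0`) and every `i` with
`1 ≤ i ≤ f(1) + 1`, the maximum degree of the underlying graph of the q-Jaco graph
`J_i(f)` equals `i − 1`, and the Jaconian set (the set of vertices of maximum degree)
is the whole vertex set `{v_1, …, v_i}`. -/
theorem qJaco_small_maxDegree_and_jaconian_set (a b c : ℕ) (ha : 1 ≤ a) (i : ℕ)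
    (h1 : 1 ≤ i) (h2 : i ≤ (a * 1 ^ 2 + b * 1 + c) + 1) :
    (jacoGraph (fun x => a * x ^ 2 + b * x + c) i).maxDegree = i - 1 ∧
    {v : Fin i | (jacoGraph (fun x => a * x ^ 2 + b * x + c) i).degree v =
        (jacoGraph (fun x => a * x ^ 2 + b * x + c) i).maxDegree} = Set.univ := by
  refine qJaco_small_maxDegree_and_jaconian_set_general _ i h1 fun x hx => h2.trans ?_
  gcongr
  all_goals exact (Finset.mem_Ico.mp hx).1
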